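/- Let I be an ideal of a commutative ring R with finitely many minimal primes P₁,…,Pₛ (s ≥ 2), fix P = P₁, and suppose s ∈ R satisfies s ∉ P and s ∈ Pⱼ for all j ≥ 2. Then the saturation I : s^∞ has radical equal to P; in particular I : s^∞ is pseudo-primary. -/

import Mathlib

/-- The saturation `I : s^∞ = ⋃ k, (I : s^k)`. -/
def Ideal.sat {R : Type*} [CommRing R] (I : Ideal R) (s : R) : Ideal R :=
  ⨆ k : ℕ, I.colon (Ideal.span {s ^ k})

theorem stmt_8 {R : Type*} [CommRing R] [IsNoetherianRing R]
    (I : Ideal R) (m : ℕ) (hm : 2 ≤ m) (P : Fin m → Ideal R) (i₀ : Fin m)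
    (hmin : I.minimalPrimes = Set.range P) (hinj : Function.Injective P)
    (s : R) (hs0 : s ∉ P i₀) (hsj : ∀ j : Fin m, j ≠ i₀ → s ∈ P j) :
    (I.sat s).radical = P i₀ := by
  have hP : P i₀ ∈ I.minimalPrimes := by rw [hmin]; exact ⟨i₀, rfl⟩
  have hprime : (P i₀).IsPrime := hP.1.1
  have hle : I ≤ P i₀ := hP.1.2
  apply le_antisymm
  · rw [hprime.radical_le_iff]
    refine iSup_le fun k f hf => ?_
    have h : f * s ^ k ∈ I := by
      have := Submodule.mem_colon.1 hf (s ^ k) (Ideal.mem_span_singleton_self _)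
      simpa using this
    rcases hprime.mem_or_mem (hle h) with h | h
    · exact h
    · exact absurd (hprime.mem_of_pow_mem k h) hs0
  · intro f hf
    have h : f * s ∈ I.radical := by
      rw [← Ideal.sInf_minimalPrimes, hmin, Submodule.mem_sInf]
      rintro _ ⟨j, rfl⟩
      by_cases hj : j = i₀
      · subst hj
        exact Ideal.mul_mem_right _ _ hf
      · exact Ideal.mul_mem_left _ _ (hsj j hj)
    obtain ⟨n, hn⟩ := h
    refine ⟨n, ?_⟩
    refine (le_iSup (fun k : ℕ => I.colon (Ideal.span {s ^ k} : Set R)) n) ?_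
    refine Submodule.mem_colon.2 fun p hp => ?_
    obtain ⟨c, rfl⟩ := Ideal.mem_span_singleton'.1 hp
    have e : f ^ n • (c * s ^ n) = c * (f * s) ^ n := by
      rw [smul_eq_mul, mul_pow]; ring
    rw [e]
    exact Ideal.mul_mem_left _ _ hn
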